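/- arXiv:1707.03492 — 2 statements merged into one kernel-verified Lean document; each statement's English description precedes it below -/
import Mathlib

section
/- (Preserved Visibility) In the robot model on a line, if robots i and j satisfy |x t i − x t j| ≤ V at some time t (i.e., j ∈ N(i,t)), then |x (t+1) i − x (t+1) j| ≤ V (i.e., j ∈ N(i,t+1)). Consequently, by induction, j ∈ N(i,t') for every t' ≥ t. -/
open Filter Topology

/-- Position of the farthest left robot visible from robot `i` at time `t`
(visibility radius `V`). -/
noncomputable def lpos {n : ℕ} (V : ℝ) (x : ℕ → Fin (n + 1) → ℝ)
    (t : ℕ) (i : Fin (n + 1)) : ℝ :=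
  sInf (x t '' {j | |x t j - x t i| ≤ V})

/-- Position of the farthest right robot visible from robot `i` at time `t`
(visibility radius `V`). -/
noncomputable def rpos {n : ℕ} (V : ℝ) (x : ℕ → Fin (n + 1) → ℝ)
    (t : ℕ) (i : Fin (n + 1)) : ℝ :=
  sSup (x t '' {j | |x t j - x t i| ≤ V})

/-!
If robots `i` and `j` at positions `a` and `b` see each other, then `a - V ≤ l ≤ b` and
`b ≤ r ≤ a + V` for the leftmost and rightmost positions `l`, `r` that `i` sees. Averaging, the
target `(l + r) / 2` of `i` lies within `V / 2` of the midpoint of `a` and `b`. So does `a` itself,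
hence every point where `i` may stop on its way. The same ball contains the next position of `j`,
and it has diameter `V`.
-/

section Configuration

open Set Metric

variable {ι : Type*} {V : ℝ} {p q : ι → ℝ} {i j : ι}

/-- The set of positions that robot `i` with visibility radius `V` sees in the configuration `p`.
The index type `ι` may be infinite: this set is bounded in any case. -/
def visiblePositions (V : ℝ) (p : ι → ℝ) (i : ι) : Set ℝ :=
  p '' {j | |p j - p i| ≤ V}

/-- The target `(l + r) / 2` of robot `i` in the configuration `p`: the centre of the smallest
closed interval containing all the positions it sees. For `V < 0` nothing is visible and the value
is the junk value `0`. -/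
noncomputable def visibleCenter (V : ℝ) (p : ι → ℝ) (i : ι) : ℝ :=
  (sInf (visiblePositions V p i) + sSup (visiblePositions V p i)) / 2

theorem mem_visiblePositions (h : |p i - p j| ≤ V) : p j ∈ visiblePositions V p i :=
  ⟨j, (abs_sub_comm _ _).trans_le h, rfl⟩

theorem visiblePositions_subset_Icc : visiblePositions V p i ⊆ Icc (p i - V) (p i + V) := by
  rintro _ ⟨k, hk, rfl⟩
  exact mem_Icc_iff_abs_le.mp ((abs_sub_comm _ _).trans_le hk)

theorem sInf_visiblePositions_mem_Icc (h : |p i - p j| ≤ V) :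
    sInf (visiblePositions V p i) ∈ Icc (p i - V) (p j) :=
  ⟨le_csInf ⟨_, mem_visiblePositions h⟩ fun _ hy => (visiblePositions_subset_Icc hy).1,
    csInf_le (bddBelow_Icc.mono visiblePositions_subset_Icc) (mem_visiblePositions h)⟩

theorem sSup_visiblePositions_mem_Icc (h : |p i - p j| ≤ V) :
    sSup (visiblePositions V p i) ∈ Icc (p j) (p i + V) :=
  ⟨le_csSup (bddAbove_Icc.mono visiblePositions_subset_Icc) (mem_visiblePositions h),
    csSup_le ⟨_, mem_visiblePositions h⟩ fun _ hy => (visiblePositions_subset_Icc hy).2⟩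

theorem visibleCenter_mem_closedBall_midpoint (h : |p i - p j| ≤ V) :
    visibleCenter V p i ∈ closedBall (midpoint ℝ (p i) (p j)) (V / 2) := by
  obtain ⟨hl, hl'⟩ := sInf_visiblePositions_mem_Icc h
  obtain ⟨hr, hr'⟩ := sSup_visiblePositions_mem_Icc h
  rw [Real.closedBall_eq_Icc, midpoint_eq_smul_add, smul_eq_mul, invOf_eq_inv, visibleCenter]
  constructor <;> linarith

theorem segment_visibleCenter_subset_closedBall_midpoint (h : |p i - p j| ≤ V) :
    segment ℝ (p i) (visibleCenter V p i) ⊆ closedBall (midpoint ℝ (p i) (p j)) (V / 2) := by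
  have hstart : p i ∈ closedBall (midpoint ℝ (p i) (p j)) (V / 2) := by
    rw [mem_closedBall, dist_left_midpoint, Real.norm_ofNat, Real.dist_eq]
    linarith
  exact (convex_closedBall _ _).segment_subset hstart (visibleCenter_mem_closedBall_midpoint h)

theorem abs_sub_le_of_mem_segment_visibleCenter (h : |p i - p j| ≤ V)
    (hi : q i ∈ segment ℝ (p i) (visibleCenter V p i))
    (hj : q j ∈ segment ℝ (p j) (visibleCenter V p j)) :
    |q i - q j| ≤ V := by
  have hi' : q i ∈ closedBall (midpoint ℝ (p i) (p j)) (V / 2) :=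
    segment_visibleCenter_subset_closedBall_midpoint h hi
  have hj' : q j ∈ closedBall (midpoint ℝ (p i) (p j)) (V / 2) := by
    rw [midpoint_comm]
    exact segment_visibleCenter_subset_closedBall_midpoint ((abs_sub_comm _ _).trans_le h) hj
  calc |q i - q j| = dist (q i) (q j) := (Real.dist_eq _ _).symm
    _ ≤ dist (q i) (midpoint ℝ (p i) (p j)) + dist (q j) (midpoint ℝ (p i) (p j)) :=
      dist_triangle_right _ _ _
    _ ≤ V / 2 + V / 2 := add_le_add hi' hj'
    _ = V := add_halves V

end Configuration

/-- The ends of the segments are the faulty robots, which stay where they are, and the robots that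
reach their targets; the points in between are robots stopped on their way. -/
theorem preserved_visibility_general {ι : Type*} {V : ℝ} {x : ℕ → ι → ℝ} {i j : ι} {t : ℕ}
    (hi : ∀ s ≥ t, x (s + 1) i ∈ segment ℝ (x s i) (visibleCenter V (x s) i))
    (hj : ∀ s ≥ t, x (s + 1) j ∈ segment ℝ (x s j) (visibleCenter V (x s) j))
    (hvis : |x t i - x t j| ≤ V) :
    ∀ t' ≥ t, |x t' i - x t' j| ≤ V := by
  intro t' ht'
  induction t', ht' using Nat.le_induction with
  | base => exact hvis
  | succ s hs ih => exact abs_sub_le_of_mem_segment_visibleCenter ih (hi s hs) (hj s hs)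

theorem visibleCenter_eq_lpos_add_rpos_div_two {n : ℕ} (V : ℝ) (x : ℕ → Fin (n + 1) → ℝ) (t : ℕ)
    (i : Fin (n + 1)) : visibleCenter V (x t) i = (lpos V x t i + rpos V x t i) / 2 :=
  rfl

theorem succ_mem_segment_visibleCenter {n : ℕ} {V a b : ℝ} {x : ℕ → Fin (n + 1) → ℝ}
    (hfirst : ∀ t, x t 0 = a) (hlast : ∀ t, x t (Fin.last n) = b)
    (hupd : ∀ t i, i ≠ 0 → i ≠ Fin.last n → x (t + 1) i = (lpos V x t i + rpos V x t i) / 2)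
    (t : ℕ) (i : Fin (n + 1)) :
    x (t + 1) i ∈ segment ℝ (x t i) (visibleCenter V (x t) i) := by
  by_cases h0 : i = 0
  · rw [h0, hfirst (t + 1), hfirst t]
    exact left_mem_segment ℝ _ _
  by_cases hn : i = Fin.last n
  · rw [hn, hlast (t + 1), hlast t]
    exact left_mem_segment ℝ _ _
  rw [hupd t i h0 hn, visibleCenter_eq_lpos_add_rpos_div_two]
  exact right_mem_segment ℝ _ _

/-- (Preserved Visibility) A robot never loses visibility of a robot it has
seen in the past. -/
theorem preserved_visibility
    (n : ℕ) (hn : 2 ≤ n) (V D : ℝ) (hV : 0 < V) (hD : 0 < D)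
    (x : ℕ → Fin (n + 1) → ℝ)
    (hfault0 : ∀ t : ℕ, x t 0 = 0)
    (hfaultn : ∀ t : ℕ, x t (Fin.last n) = D)
    (hupd : ∀ t : ℕ, ∀ i : Fin (n + 1), i ≠ 0 → i ≠ Fin.last n →
      x (t + 1) i = (lpos V x t i + rpos V x t i) / 2)
    (i j : Fin (n + 1)) (t : ℕ) (hvis : |x t i - x t j| ≤ V) :
    ∀ t' : ℕ, t ≤ t' → |x t' i - x t' j| ≤ V := by
  have hmove := succ_mem_segment_visibleCenter hfault0 hfaultn hupd
  exact preserved_visibility_general (fun s _ => hmove s i) (fun s _ => hmove s j) hvis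
end

section
/- In the robot model on a line, assume the visibility graph at time 0 is connected. Let ℓ be a non-faulty robot that is leftmost among non-faulty robots at time 0, i.e., x 0 ℓ ≤ x 0 i for every non-faulty robot i, and suppose x t ℓ < 0 for every time t (ℓ never enters the segment [0,D]). Then the sequence t ↦ x t ℓ is strictly increasing and x t ℓ → 0 as t → ∞; that is, a robot that perpetually stays to the left of the segment converges to the left faulty robot. -/
open Filter Topology

/-!
Robots that see each other stay within `V / 2` of the midpoint of their positions, so visibility
persists and the visibility graph stays connected; the midpoint rule also preserves the order of
non-faulty robots, so `ℓ` remains leftmost. It therefore steps half way to the farthest robot it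
sees, which gives monotonicity and convergence to some limit `L`, and the farthest position it
sees also tends to `L`. If `L` were left of every faulty robot, then eventually `ℓ` would see only
non-faulty robots. One of these sees a robot out of reach of `ℓ`, so it lands at least `V / 2` to
the right of the previous position of `ℓ` while remaining visible to `ℓ`: in the limit,
`L + V / 2 ≤ L`.
-/

section

open Relation

/-- Adjacency in the visibility graph at time `t`. -/
def Visible {n : ℕ} (V : ℝ) (x : ℕ → Fin (n + 1) → ℝ) (t : ℕ) (i j : Fin (n + 1)) : Prop :=
  |x t i - x t j| ≤ V

/-- The robot model with an arbitrary set `F` of faulty robots, which never move, while every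
other robot obeys the synchronous midpoint rule. -/
structure IsExecution {n : ℕ} (V : ℝ) (F : Set (Fin (n + 1))) (x : ℕ → Fin (n + 1) → ℝ) :
    Prop where
  succ_of_mem : ∀ t, ∀ i ∈ F, x (t + 1) i = x t i
  succ_of_notMem : ∀ t, ∀ i ∉ F, x (t + 1) i = (lpos V x t i + rpos V x t i) / 2

lemma exists_rel_and_not_of_reflTransGen {α : Type*} {r : α → α → Prop} {a b : α}
    (hab : ReflTransGen r a b) (p : α → Prop) (ha : p a) (hb : ¬p b) :
    ∃ c d, p c ∧ ¬p d ∧ r c d := by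
  by_contra! hclosed
  refine hb ?_
  clear hb
  induction hab with
  | refl => exact ha
  | tail _ hcd hc => exact by_contra fun hd => hclosed _ _ hc hd hcd

variable {n : ℕ} {V : ℝ} {x : ℕ → Fin (n + 1) → ℝ} {t : ℕ} {i j ℓ o : Fin (n + 1)}

namespace Visible

lemma refl (hV : 0 ≤ V) (i : Fin (n + 1)) : Visible V x t i i := by
  simpa [Visible] using hV

lemma symm (h : Visible V x t i j) : Visible V x t j i :=
  (abs_sub_comm _ _).trans_le h

lemma nonneg (h : Visible V x t i j) : 0 ≤ V :=
  (abs_nonneg _).trans h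

lemma sub_le (h : Visible V x t i j) : x t i - x t j ≤ V :=
  (le_abs_self _).trans h

end Visible

lemma lpos_le (h : Visible V x t i j) : lpos V x t i ≤ x t j :=
  csInf_le (Set.toFinite _).bddBelow ⟨j, h.symm, rfl⟩

lemma le_rpos (h : Visible V x t i j) : x t j ≤ rpos V x t i :=
  le_csSup (Set.toFinite _).bddAbove ⟨j, h.symm, rfl⟩

lemma le_lpos (hV : 0 ≤ V) {c : ℝ} (h : ∀ j, Visible V x t i j → c ≤ x t j) :
    c ≤ lpos V x t i :=
  le_csInf ⟨_, i, Visible.refl hV i, rfl⟩ <| Set.forall_mem_image.2 fun j hj => h j (.symm hj)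

lemma rpos_le (hV : 0 ≤ V) {c : ℝ} (h : ∀ j, Visible V x t i j → x t j ≤ c) :
    rpos V x t i ≤ c :=
  csSup_le ⟨_, i, Visible.refl hV i, rfl⟩ <| Set.forall_mem_image.2 fun j hj => h j (.symm hj)

lemma sub_le_lpos (hV : 0 ≤ V) : x t i - V ≤ lpos V x t i :=
  le_lpos hV fun _ hj => by linarith [hj.sub_le]

lemma rpos_le_add (hV : 0 ≤ V) : rpos V x t i ≤ x t i + V :=
  rpos_le hV fun _ hj => by linarith [hj.symm.sub_le]

lemma lpos_mono (hV : 0 ≤ V) (hij : x t i ≤ x t j) : lpos V x t i ≤ lpos V x t j := by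
  refine le_lpos hV fun k hk => ?_
  rcases le_total (x t i) (x t k) with hik | hki
  · exact (lpos_le (.refl hV i)).trans hik
  · exact lpos_le (abs_sub_le_iff.2 ⟨by linarith [hk.sub_le], by linarith⟩)

lemma rpos_mono (hV : 0 ≤ V) (hij : x t i ≤ x t j) : rpos V x t i ≤ rpos V x t j := by
  refine rpos_le hV fun k hk => ?_
  rcases le_total (x t k) (x t j) with hkj | hjk
  · exact hkj.trans (le_rpos (.refl hV j))
  · exact le_rpos (abs_sub_le_iff.2 ⟨by linarith, by linarith [hk.symm.sub_le]⟩)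

lemma lpos_eq_self_of_leftmost (hV : 0 ≤ V) (hmin : ∀ i, x t ℓ ≤ x t i) :
    lpos V x t ℓ = x t ℓ :=
  (lpos_le (.refl hV ℓ)).antisymm (le_lpos hV fun i _ => hmin i)

lemma exists_visible_gt_of_leftmost (hmin : ∀ i, x t ℓ ≤ x t i)
    (hconn : ReflTransGen (Visible V x t) ℓ o) (ho : x t ℓ < x t o) :
    ∃ i, Visible V x t ℓ i ∧ x t ℓ < x t i := by
  obtain ⟨a, b, ha, hb, hab⟩ :=
    exists_rel_and_not_of_reflTransGen hconn (x t · ≤ x t ℓ) le_rfl ho.not_ge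
  have haℓ : x t a = x t ℓ := le_antisymm ha (hmin a)
  exact ⟨b, by rwa [Visible, ← haℓ], not_le.1 hb⟩

namespace IsExecution

variable {F : Set (Fin (n + 1))}

lemma eq_initial_of_mem (hx : IsExecution V F x) (hi : i ∈ F) (t : ℕ) : x t i = x 0 i := by
  induction t with
  | zero => rfl
  | succ t ih => rw [hx.succ_of_mem t i hi, ih]

/-- If `i` is not faulty, then `lpos ≤ x t j` and `rpos ≤ x t i + V`, and symmetrically from below;
if it is, then it is already that close to the midpoint. -/
lemma abs_succ_sub_midpoint_le (hx : IsExecution V F x) (h : Visible V x t i j) :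
    |x (t + 1) i - (x t i + x t j) / 2| ≤ V / 2 := by
  rw [abs_sub_le_iff]
  by_cases hi : i ∈ F
  · rw [hx.succ_of_mem t i hi]
    constructor <;> linarith [h.sub_le, h.symm.sub_le]
  · have hl : x t i - V ≤ lpos V x t i ∧ lpos V x t i ≤ x t j := ⟨sub_le_lpos h.nonneg, lpos_le h⟩
    have hr : x t j ≤ rpos V x t i ∧ rpos V x t i ≤ x t i + V := ⟨le_rpos h, rpos_le_add h.nonneg⟩
    rw [hx.succ_of_notMem t i hi]
    constructor <;> linarith

lemma monotone_visible (hx : IsExecution V F x) (i j : Fin (n + 1)) :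
    Monotone fun t => Visible V x t i j := by
  refine monotone_nat_of_le_succ fun t h => abs_sub_le_iff.2 ?_
  have hi := abs_sub_le_iff.1 (hx.abs_succ_sub_midpoint_le h)
  have hj := abs_sub_le_iff.1 (hx.abs_succ_sub_midpoint_le (Visible.symm h))
  constructor <;> linarith

lemma monotone_reflTransGen_visible (hx : IsExecution V F x) (i j : Fin (n + 1)) :
    Monotone fun t => ReflTransGen (Visible V x t) i j :=
  fun _ _ hst => ReflTransGen.mono (fun a b => hx.monotone_visible a b hst) i j

lemma monotone_le (hx : IsExecution V F x) (hV : 0 ≤ V) (hi : i ∉ F) (hj : j ∉ F) :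
    Monotone fun t => x t i ≤ x t j := by
  refine monotone_nat_of_le_succ fun t (h : x t i ≤ x t j) => ?_
  rw [hx.succ_of_notMem t i hi, hx.succ_of_notMem t j hj]
  linarith [lpos_mono hV h, rpos_mono hV h]

lemma succ_of_leftmost (hx : IsExecution V F x) (hV : 0 ≤ V) (hℓ : ℓ ∉ F)
    (hmin : ∀ i, x t ℓ ≤ x t i) : x (t + 1) ℓ = (x t ℓ + rpos V x t ℓ) / 2 := by
  rw [hx.succ_of_notMem t ℓ hℓ, lpos_eq_self_of_leftmost hV hmin]

lemma lt_succ_of_leftmost (hx : IsExecution V F x) (hℓ : ℓ ∉ F) (hmin : ∀ i, x t ℓ ≤ x t i)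
    (hconn : ReflTransGen (Visible V x t) ℓ o) (ho : x t ℓ < x t o) :
    x t ℓ < x (t + 1) ℓ := by
  obtain ⟨i, hℓi, hi⟩ := exists_visible_gt_of_leftmost hmin hconn ho
  rw [hx.succ_of_leftmost hℓi.nonneg hℓ hmin]
  linarith [le_rpos hℓi]

lemma add_half_le_rpos_succ (hx : IsExecution V F x) (hV : 0 ≤ V)
    (hmin : ∀ i, x t ℓ ≤ x t i) (hconn : ReflTransGen (Visible V x t) ℓ o) (ho : o ∈ F)
    (hF : ∀ i ∈ F, rpos V x t ℓ < x t i) :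
    x t ℓ + V / 2 ≤ rpos V x (t + 1) ℓ := by
  obtain ⟨a, b, hℓa, hℓb, hab⟩ :=
    exists_rel_and_not_of_reflTransGen hconn (Visible V x t ℓ) (.refl hV ℓ)
      fun h => (hF o ho).not_ge (le_rpos h)
  have ha : a ∉ F := fun h => (hF a h).not_ge (le_rpos hℓa)
  have hb : x t ℓ + V ≤ x t b := by
    by_contra! h
    exact hℓb (abs_sub_le_iff.2 ⟨by linarith [hmin b], by linarith⟩)
  calc x t ℓ + V / 2 = (x t ℓ + (x t ℓ + V)) / 2 := by ring
    _ ≤ (lpos V x t a + rpos V x t a) / 2 := by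
      linarith [le_lpos hV fun j (_ : Visible V x t a j) => hmin j, le_rpos hab]
    _ = x (t + 1) a := (hx.succ_of_notMem t a ha).symm
    _ ≤ rpos V x (t + 1) ℓ := le_rpos (hx.monotone_visible ℓ a t.le_succ hℓa)

lemma tendsto_rpos_of_leftmost (hx : IsExecution V F x) (hV : 0 ≤ V) (hℓ : ℓ ∉ F)
    (hmin : ∀ t i, x t ℓ ≤ x t i) {L : ℝ} (hL : Tendsto (fun t => x t ℓ) atTop (𝓝 L)) :
    Tendsto (fun t => rpos V x t ℓ) atTop (𝓝 L) := by
  have hrpos : ∀ t, rpos V x t ℓ = 2 * x (t + 1) ℓ - x t ℓ := fun t => by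
    rw [hx.succ_of_leftmost hV hℓ (hmin t)]
    ring
  have hsucc : Tendsto (fun t => x (t + 1) ℓ) atTop (𝓝 L) := (tendsto_add_atTop_iff_nat 1).2 hL
  simpa only [hrpos, two_mul, add_sub_cancel_right] using (hsucc.const_mul 2).sub hL

lemma le_of_tendsto_leftmost (hx : IsExecution V F x) (hV : 0 < V) (hℓ : ℓ ∉ F)
    (hmin : ∀ t i, x t ℓ ≤ x t i) (hconn : ReflTransGen (Visible V x 0) ℓ o) (ho : o ∈ F)
    (hF : ∀ i ∈ F, x 0 o ≤ x 0 i) {L : ℝ} (hL : Tendsto (fun t => x t ℓ) atTop (𝓝 L)) :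
    x 0 o ≤ L := by
  by_contra! hLo
  have hr := hx.tendsto_rpos_of_leftmost hV.le hℓ hmin hL
  have hjump : ∀ᶠ t in atTop, x t ℓ + V / 2 ≤ rpos V x (t + 1) ℓ := by
    filter_upwards [hr.eventually_lt_const hLo] with t ht
    refine hx.add_half_le_rpos_succ hV.le (hmin t)
      (hx.monotone_reflTransGen_visible ℓ o t.zero_le hconn) ho fun i hi => ?_
    rw [hx.eq_initial_of_mem hi]
    exact ht.trans_le (hF i hi)
  have hlim : L + V / 2 ≤ L :=
    le_of_tendsto_of_tendsto (hL.add_const _) ((tendsto_add_atTop_iff_nat 1).2 hr) hjump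
  linarith

end IsExecution

theorem perpetual_outsider_converges_general {F : Set (Fin (n + 1))} (hx : IsExecution V F x)
    (ho : o ∈ F) (hF : ∀ i ∈ F, x 0 o ≤ x 0 i) (hconn : ReflTransGen (Visible V x 0) ℓ o)
    (hℓ : ℓ ∉ F) (hleftmost : ∀ i ∉ F, x 0 ℓ ≤ x 0 i) (hout : ∀ t, x t ℓ < x 0 o) :
    StrictMono (fun t => x t ℓ) ∧ Tendsto (fun t => x t ℓ) atTop (𝓝 (x 0 o)) := by
  have hmin₀ : ∀ i, x 0 ℓ ≤ x 0 i := fun i =>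
    (em (i ∈ F)).elim (fun hi => (hout 0).le.trans (hF i hi)) (hleftmost i)
  have hV : 0 < V := by
    obtain ⟨i, hℓi, hi⟩ := exists_visible_gt_of_leftmost hmin₀ hconn (hout 0)
    linarith [hℓi.symm.sub_le]
  have hmin : ∀ t i, x t ℓ ≤ x t i := fun t i => by
    by_cases hi : i ∈ F
    · exact (hout t).le.trans ((hF i hi).trans_eq (hx.eq_initial_of_mem hi t).symm)
    · exact hx.monotone_le hV.le hℓ hi t.zero_le (hleftmost i hi)
  have hmono : StrictMono fun t => x t ℓ := strictMono_nat_of_lt_succ fun t =>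
    hx.lt_succ_of_leftmost hℓ (hmin t) (hx.monotone_reflTransGen_visible ℓ o t.zero_le hconn)
      ((hout t).trans_eq (hx.eq_initial_of_mem ho t).symm)
  have hlim : Tendsto (fun t => x t ℓ) atTop (𝓝 (⨆ t, x t ℓ)) :=
    tendsto_atTop_ciSup hmono.monotone ⟨x 0 o, Set.forall_mem_range.2 fun t => (hout t).le⟩
  have hsup : ⨆ t, x t ℓ = x 0 o := (ciSup_le fun t => (hout t).le).antisymm
    (hx.le_of_tendsto_leftmost hV hℓ hmin hconn ho hF hlim)
  exact ⟨hmono, hsup ▸ hlim⟩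

end

/-- A leftmost non-faulty robot that perpetually stays to the left of the
segment `[0, D]` moves strictly monotonically and converges to the left
faulty robot. -/
theorem perpetual_outsider_converges
    (n : ℕ) (hn : 2 ≤ n) (V D : ℝ) (hV : 0 < V) (hD : 0 < D)
    (x : ℕ → Fin (n + 1) → ℝ)
    (hfault0 : ∀ t : ℕ, x t 0 = 0)
    (hfaultn : ∀ t : ℕ, x t (Fin.last n) = D)
    (hupd : ∀ t : ℕ, ∀ i : Fin (n + 1), i ≠ 0 → i ≠ Fin.last n →
      x (t + 1) i = (lpos V x t i + rpos V x t i) / 2)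
    (hconn : ∀ i j : Fin (n + 1),
      Relation.ReflTransGen (fun a b : Fin (n + 1) => |x 0 a - x 0 b| ≤ V) i j)
    (ℓ : Fin (n + 1)) (hℓ0 : ℓ ≠ 0) (hℓn : ℓ ≠ Fin.last n)
    (hleftmost : ∀ i : Fin (n + 1), i ≠ 0 → i ≠ Fin.last n → x 0 ℓ ≤ x 0 i)
    (hout : ∀ t : ℕ, x t ℓ < 0) :
    StrictMono (fun t => x t ℓ) ∧
      Tendsto (fun t => x t ℓ) atTop (nhds 0) := by
  have hmem {i : Fin (n + 1)} : i ∉ ({0, Fin.last n} : Set (Fin (n + 1))) ↔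
      i ≠ 0 ∧ i ≠ Fin.last n := not_or
  have hx : IsExecution V {0, Fin.last n} x := by
    refine ⟨?_, fun t i hi => hupd t i (hmem.1 hi).1 (hmem.1 hi).2⟩
    rintro t i (rfl | rfl) <;> simp only [hfault0, hfaultn]
  have hF : ∀ i ∈ ({0, Fin.last n} : Set (Fin (n + 1))), x 0 0 ≤ x 0 i := by
    rintro i (rfl | rfl)
    · exact le_rfl
    · simpa only [hfault0, hfaultn] using hD.le
  simpa only [hfault0] using perpetual_outsider_converges_general hx (.inl rfl) hF (hconn ℓ 0)
    (hmem.2 ⟨hℓ0, hℓn⟩) (fun i hi => hleftmost i (hmem.1 hi).1 (hmem.1 hi).2)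
    fun t => (hout t).trans_eq (hfault0 0).symm
end
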